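/- Assume M ≥ 2 and fix ε > 0. There exist C > 0 and x₀ (depending only on δ, M, K, ξ, ε) such that for all x ≥ x₀ and every H ∈ 𝔥₁: E[#{q ∈ Q_H : |∑_{−Ky < n ≤ y} λ_b(H; q, n) − (K+1)y| > y/H^{1+ε}}] ≤ C·#Q_H / H^{M−4−2ε}. -/

import Mathlib

open scoped Classical

noncomputable def yy (δ x : ℝ) : ℕ := ⌈x * Real.log x ^ δ⌉₊

noncomputable def zz (δ x : ℝ) : ℝ :=
  (yy δ x : ℝ) * Real.log (Real.log x) ^ 2 / Real.log x ^ (1/2 : ℝ)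

noncomputable def primesUpTo (t : ℝ) : Finset ℕ :=
  (Finset.range (⌊t⌋₊ + 1)).filter fun p => p.Prime ∧ (p : ℝ) ≤ t

noncomputable def PP (t : ℝ) : ℕ := ∏ p ∈ primesUpTo t, p

noncomputable def sigUpTo (t : ℝ) : ℝ := ∏ p ∈ primesUpTo t, (1 - 1 / (p : ℝ))

noncomputable def primesBetween (w t : ℝ) : Finset ℕ :=
  (Finset.range (⌊t⌋₊ + 1)).filter fun p => p.Prime ∧ w < (p : ℝ) ∧ (p : ℝ) ≤ t

noncomputable def sigBetween (w t : ℝ) : ℝ := ∏ p ∈ primesBetween w t, (1 - 1 / (p : ℝ))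

def inS (t : ℝ) (b n : ℤ) : Prop :=
  ∀ p : ℕ, p.Prime → (p : ℝ) ≤ t → ¬ ((p : ℤ) ∣ (n - b))

def inSBetween (w t : ℝ) (b n : ℤ) : Prop :=
  ∀ p : ℕ, p.Prime → w < (p : ℝ) → (p : ℝ) ≤ t → ¬ ((p : ℤ) ∣ (n - b))

noncomputable def countS (t : ℝ) (b lo hi : ℤ) : ℕ :=
  ((Finset.Icc lo hi).filter (inS t b)).card

noncomputable def EE (δ x : ℝ) (g : ℤ → ℝ) : ℝ :=
  (1 / (PP (zz δ x) : ℝ)) * ∑ b ∈ Finset.range (PP (zz δ x)), g (b : ℤ)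

def frakH (δ ξ x : ℝ) : Set ℝ :=
  {H | ∃ j : ℕ, H = ξ ^ j ∧ 2 * (yy δ x : ℝ) / x ≤ H ∧ H ≤ (yy δ x : ℝ) / (ξ * zz δ x)}

def frakH1 (δ ξ x : ℝ) : Set ℝ :=
  {H | ∃ j : ℕ, Even j ∧ H = ξ ^ j ∧ 2 * (yy δ x : ℝ) / x ≤ H ∧ H ≤ (yy δ x : ℝ) / (ξ * zz δ x)}

def frakH2 (δ ξ x : ℝ) : Set ℝ :=
  {H | ∃ j : ℕ, Odd j ∧ H = ξ ^ j ∧ 2 * (yy δ x : ℝ) / x ≤ H ∧ H ≤ (yy δ x : ℝ) / (ξ * zz δ x)}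

noncomputable def QH (δ ξ x H : ℝ) : Finset ℕ :=
  (Finset.range (⌊(yy δ x : ℝ) / H⌋₊ + 1)).filter fun q =>
    q.Prime ∧ (yy δ x : ℝ) / (ξ * H) < (q : ℝ) ∧ (q : ℝ) ≤ (yy δ x : ℝ) / H

noncomputable def Hq (δ ξ x : ℝ) (q : ℕ) : ℝ :=
  if h : ∃ H ∈ frakH δ ξ x, (yy δ x : ℝ) / (ξ * H) < (q : ℝ) ∧ (q : ℝ) ≤ (yy δ x : ℝ) / H
  then h.choose else 1

noncomputable def APset (M : ℝ) (K : ℕ) (b : ℤ) (H : ℝ) (q : ℕ) (n : ℤ) : Finset ℤ :=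
  ((Finset.Icc 1 ⌊(K : ℝ) * H⌋₊).image fun h : ℕ => n + (q : ℤ) * (h : ℤ)).filter (inS (H ^ M) b)

noncomputable def lam (M zv : ℝ) (K : ℕ) (b : ℤ) (H : ℝ) (q : ℕ) (n : ℤ) : ℝ :=
  if ∀ m ∈ APset M K b H q n, inSBetween (H ^ M) zv b m
  then sigBetween (H ^ M) zv ^ (-((APset M K b H q n).card : ℤ))
  else 0

noncomputable def APsetStar (M : ℝ) (K : ℕ) (N b : ℤ) (H : ℝ) (q : ℕ) (n : ℤ) : Finset ℤ :=
  ((Finset.Icc 1 ⌊(K : ℝ) * H⌋₊).image fun h : ℕ => n - (q : ℤ) * (h : ℤ)).filter (inS (H ^ M) (-N - b))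

noncomputable def lamStar (M zv : ℝ) (K : ℕ) (N b : ℤ) (H : ℝ) (q : ℕ) (n : ℤ) : ℝ :=
  if ∀ m ∈ APsetStar M K N b H q n, inSBetween (H ^ M) zv (-N - b) m
  then sigBetween (H ^ M) zv ^ (-((APsetStar M K N b H q n).card : ℤ))
  else 0

/-- Chinese remainder theorem, as a factorisation of a complete sum modulo `m * n`. -/
lemma sum_range_mul_of_coprime {m n : ℕ} (h : m.Coprime n) (hm : m ≠ 0) (hn : n ≠ 0)
    (F : ℕ → ℕ → ℝ) :
    ∑ c ∈ Finset.range (m * n), F (c % m) (c % n) =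
      ∑ a ∈ Finset.range m, ∑ b ∈ Finset.range n, F a b := by
  rw [← Finset.sum_product']
  refine Finset.sum_nbij' (fun c => (c % m, c % n))
    (fun ab => (Nat.chineseRemainder h ab.1 ab.2 : ℕ)) ?_ ?_ ?_ ?_ ?_
  · intro c _
    simp [Nat.mod_lt _ (Nat.pos_of_ne_zero hm), Nat.mod_lt _ (Nat.pos_of_ne_zero hn)]
  · intro ab _
    simpa using Nat.chineseRemainder_lt_mul h ab.1 ab.2 hm hn
  · intro c hc
    have hk := (Nat.chineseRemainder h (c % m) (c % n)).2
    have h1 : ((Nat.chineseRemainder h (c % m) (c % n) : ℕ)) ≡ c [MOD m * n] :=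
      (Nat.modEq_and_modEq_iff_modEq_mul h).1
        ⟨hk.1.trans (Nat.mod_modEq _ _), hk.2.trans (Nat.mod_modEq _ _)⟩
    exact h1.eq_of_lt_of_lt (Nat.chineseRemainder_lt_mul h _ _ hm hn) (by simpa using hc)
  · rintro ⟨a, b⟩ hab
    simp only [Finset.mem_product, Finset.mem_range] at hab
    have hk := (Nat.chineseRemainder h a b).2
    ext
    · exact Eq.trans hk.1 (Nat.mod_eq_of_lt hab.1)
    · exact Eq.trans hk.2 (Nat.mod_eq_of_lt hab.2)
  · intro c _
    rfl

/-- The residue class of `c` avoids, modulo every `p ∈ s`, all the elements of `A`. -/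
def Avoids (s : Finset ℕ) (A : Finset ℤ) (c : ℤ) : Prop :=
  ∀ p ∈ s, ∀ m ∈ A, ¬ ((p : ℤ) ∣ m - c)

lemma dvd_sub_iff_of_mod_eq {p : ℕ} {c c' : ℕ} (h : c % p = c' % p) (m : ℤ) :
    (p : ℤ) ∣ m - c ↔ (p : ℤ) ∣ m - c' := by
  have h1 : (p : ℤ) ∣ (c' : ℤ) - c := (Nat.modEq_iff_dvd).1 h
  constructor <;> intro h2
  · have := dvd_sub h2 h1
    simpa using this
  · have := dvd_add h2 h1
    simpa using this

lemma avoids_congr {s : Finset ℕ} {A : Finset ℤ} {Q c c' : ℕ} (hs : ∀ p ∈ s, p ∣ Q)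
    (h : c % Q = c' % Q) : Avoids s A c ↔ Avoids s A c' := by
  have key : ∀ p ∈ s, ∀ m : ℤ, (p : ℤ) ∣ m - c ↔ (p : ℤ) ∣ m - c' := fun p hp m =>
    dvd_sub_iff_of_mod_eq (Nat.ModEq.of_dvd (hs p hp) h) m
  unfold Avoids
  exact forall₂_congr fun p hp => forall₂_congr fun m _ => not_congr (key p hp m)

lemma sum_avoids_singleton {p : ℕ} (hp : p ≠ 0) (A : Finset ℤ) :
    ∑ c ∈ Finset.range p, (if Avoids {p} A (c : ℤ) then (1 : ℝ) else 0) =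
      p - (A.image (· % (p : ℤ))).card := by
  have hp' : (p : ℤ) ≠ 0 := by exact_mod_cast hp
  have h1 : ((Finset.range p).filter fun c : ℕ => ¬ Avoids {p} A (c : ℤ)).card =
      (A.image (· % (p : ℤ))).card := by
    refine Finset.card_bij (fun c _ => (c : ℤ)) ?_ (fun a _ b _ h => by exact_mod_cast h) ?_
    · intro c hc
      simp only [Finset.mem_filter, Finset.mem_range, Avoids, Finset.mem_singleton, forall_eq,
        not_forall, not_not] at hc
      obtain ⟨hc, m, hm, hd⟩ := hc
      refine Finset.mem_image.2 ⟨m, hm, ?_⟩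
      have h2 : m % p = (c : ℤ) % p := ((Int.modEq_iff_dvd).2 hd).symm
      simpa [h2] using Int.emod_eq_of_lt (by positivity) (by exact_mod_cast hc)
    · intro r hr
      obtain ⟨m, hm, rfl⟩ := Finset.mem_image.1 hr
      have h0 := Int.emod_nonneg m hp'
      have hlt := Int.emod_lt_of_pos m (by positivity : (0 : ℤ) < p)
      refine ⟨(m % p).toNat, ?_, Int.toNat_of_nonneg h0⟩
      simp only [Finset.mem_filter, Finset.mem_range, Avoids, Finset.mem_singleton, forall_eq,
        not_forall, not_not]
      refine ⟨by omega, m, hm, ?_⟩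
      rw [Int.toNat_of_nonneg h0]
      exact Int.dvd_self_sub_emod
  have h2 := Finset.card_filter_add_card_filter_not (s := Finset.range p)
    (fun c : ℕ => Avoids {p} A (c : ℤ))
  rw [h1, Finset.card_range] at h2
  rw [Finset.sum_boole]
  have : (((Finset.range p).filter fun c : ℕ => Avoids {p} A (c : ℤ)).card : ℝ) +
      (A.image (· % (p : ℤ))).card = p := by exact_mod_cast h2
  linarith

lemma sum_avoids (s : Finset ℕ) (hs : ∀ p ∈ s, p.Prime) (A : Finset ℤ) :
    ∑ c ∈ Finset.range (∏ p ∈ s, p), (if Avoids s A (c : ℤ) then (1 : ℝ) else 0) =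
      ∏ p ∈ s, ((p : ℝ) - (A.image (· % (p : ℤ))).card) := by
  induction s using Finset.induction_on with
  | empty => simp [Avoids]
  | insert p s hp ih =>
    have hpp : p.Prime := hs p (by simp)
    have hs' : ∀ r ∈ s, r.Prime := fun r hr => hs r (by simp [hr])
    have hcop : p.Coprime (∏ r ∈ s, r) := Nat.Coprime.prod_right fun r hr =>
      (Nat.coprime_primes hpp (hs' r hr)).2 (by rintro rfl; exact hp hr)
    rw [Finset.prod_insert hp, Finset.prod_insert hp, ← ih hs',
      ← sum_avoids_singleton hpp.ne_zero A, Finset.sum_mul_sum,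
      ← sum_range_mul_of_coprime hcop hpp.ne_zero
        (Finset.prod_ne_zero_iff.2 fun r hr => (hs' r hr).ne_zero)
        (fun a b => (if Avoids {p} A (a : ℤ) then (1 : ℝ) else 0) *
          (if Avoids s A (b : ℤ) then (1 : ℝ) else 0))]
    refine Finset.sum_congr rfl fun c _ => ?_
    have e1 : Avoids {p} A ((c % p : ℕ) : ℤ) ↔ Avoids {p} A (c : ℤ) :=
      avoids_congr (Q := p) (by simp) (Nat.mod_mod _ _)
    have e2 : Avoids s A ((c % (∏ r ∈ s, r) : ℕ) : ℤ) ↔ Avoids s A (c : ℤ) :=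
      avoids_congr (Q := ∏ r ∈ s, r) (fun r hr => Finset.dvd_prod_of_mem _ hr) (Nat.mod_mod _ _)
    have e3 : Avoids (insert p s) A (c : ℤ) ↔ Avoids {p} A (c : ℤ) ∧ Avoids s A (c : ℤ) := by
      simp [Avoids]
    rw [ite_zero_mul_ite_zero, mul_one]
    simp only [e1, e2, e3]

lemma one_sub_sum_le_prod_one_sub {ι : Type*} (s : Finset ι) (f : ι → ℝ)
    (h0 : ∀ i ∈ s, 0 ≤ f i) (h1 : ∀ i ∈ s, f i ≤ 1) :
    1 - ∑ i ∈ s, f i ≤ ∏ i ∈ s, (1 - f i) := by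
  induction s using Finset.induction_on with
  | empty => simp
  | insert a s ha ih =>
    rw [Finset.sum_insert ha, Finset.prod_insert ha]
    have ih' := ih (fun i hi => h0 i (by simp [hi])) (fun i hi => h1 i (by simp [hi]))
    have ha0 := h0 a (by simp)
    have ha1 := h1 a (by simp)
    have hs0 : 0 ≤ ∑ i ∈ s, f i := Finset.sum_nonneg fun i hi => h0 i (by simp [hi])
    nlinarith [mul_le_mul_of_nonneg_left ih' (sub_nonneg.2 ha1), mul_nonneg ha0 hs0]

lemma sum_inv_sq_le_two_div {s : Finset ℕ} {T : ℝ} (hT : 0 < T) (hs : ∀ p ∈ s, T < p) :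
    ∑ p ∈ s, ((p : ℝ) ^ 2)⁻¹ ≤ 2 / T := by
  have hsub : s ⊆ Finset.Ioo ⌊T⌋₊ (s.sup id + 1) := by
    intro p hp
    rw [Finset.mem_Ioo]
    exact ⟨(Nat.floor_lt hT.le).2 (hs p hp), Nat.lt_succ_of_le (Finset.le_sup (f := id) hp)⟩
  calc ∑ p ∈ s, ((p : ℝ) ^ 2)⁻¹
      ≤ ∑ p ∈ Finset.Ioo ⌊T⌋₊ (s.sup id + 1), ((p : ℝ) ^ 2)⁻¹ :=
        Finset.sum_le_sum_of_subset_of_nonneg hsub fun _ _ _ => by positivity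
    _ ≤ 2 / ((⌊T⌋₊ : ℝ) + 1) := sum_Ioo_inv_sq_le _ _
    _ ≤ 2 / T := by
        gcongr
        exact (Nat.lt_floor_add_one T).le

lemma one_sub_inv_pos {p : ℕ} (hp : p.Prime) : 0 < 1 - 1 / (p : ℝ) := by
  have : (1 : ℝ) < p := by exact_mod_cast hp.one_lt
  rw [sub_pos, div_lt_one (by linarith)]
  exact this

lemma inv_one_sub_inv_le_exp {p : ℕ} (hp : p.Prime) :
    (1 - 1 / (p : ℝ))⁻¹ ≤ Real.exp (2 / p) := by
  have h2 : (2 : ℝ) ≤ p := by exact_mod_cast hp.two_le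
  have h1 : (1 - 1 / (p : ℝ))⁻¹ ≤ 2 / p + 1 := by
    rw [inv_le_iff_one_le_mul₀ (one_sub_inv_pos hp)]
    have : (2 / (p : ℝ) + 1) * (1 - 1 / p) = 1 + (p - 2) / p ^ 2 := by field_simp; ring
    rw [this]
    have : 0 ≤ ((p : ℝ) - 2) / p ^ 2 := div_nonneg (by linarith) (by positivity)
    linarith
  exact h1.trans (Real.add_one_le_exp _)

/-- The indicator that `A` survives the sieve by the class of `c` modulo the primes of `s`,
normalised by the density raised to the number of elements of `A`. -/
noncomputable def sieveWeight (s : Finset ℕ) (A : Finset ℤ) (c : ℤ) : ℝ :=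
  if Avoids s A c then (∏ p ∈ s, (1 - 1 / (p : ℝ))) ^ (-(A.card : ℤ)) else 0

lemma sieveWeight_nonneg {s : Finset ℕ} (hs : ∀ p ∈ s, p.Prime) (A : Finset ℤ) (c : ℤ) :
    0 ≤ sieveWeight s A c := by
  unfold sieveWeight
  split_ifs
  · exact zpow_nonneg (Finset.prod_nonneg fun p hp => (one_sub_inv_pos (hs p hp)).le) _
  · exact le_rfl

lemma sieveWeight_le {s : Finset ℕ} (hs : ∀ p ∈ s, p.Prime) {A : Finset ℤ} {J : ℕ}
    (hA : A.card ≤ J) (c : ℤ) :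
    sieveWeight s A c ≤ Real.exp (J * ∑ p ∈ s, 2 / (p : ℝ)) := by
  unfold sieveWeight
  split_ifs
  · have h1 : (∏ p ∈ s, (1 - 1 / (p : ℝ)))⁻¹ ≤ Real.exp (∑ p ∈ s, 2 / (p : ℝ)) := by
      rw [← Finset.prod_inv_distrib, Real.exp_sum]
      exact Finset.prod_le_prod (fun p hp => (inv_pos.2 (one_sub_inv_pos (hs p hp))).le)
        fun p hp => inv_one_sub_inv_le_exp (hs p hp)
    have h0 : 0 ≤ (∏ p ∈ s, (1 - 1 / (p : ℝ)))⁻¹ :=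
      inv_nonneg.2 (Finset.prod_nonneg fun p hp => (one_sub_inv_pos (hs p hp)).le)
    rw [zpow_neg, zpow_natCast, ← inv_pow]
    calc _ ≤ Real.exp (∑ p ∈ s, 2 / (p : ℝ)) ^ A.card := pow_le_pow_left₀ h0 h1 _
      _ ≤ Real.exp (∑ p ∈ s, 2 / (p : ℝ)) ^ J :=
        pow_le_pow_right₀ (Real.one_le_exp (Finset.sum_nonneg fun _ _ => by positivity)) hA
      _ = _ := by rw [← Real.exp_nat_mul]
  · positivity

lemma sum_sieveWeight {s : Finset ℕ} (hs : ∀ p ∈ s, p.Prime) (A : Finset ℤ) :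
    ∑ c ∈ Finset.range (∏ p ∈ s, p), sieveWeight s A (c : ℤ) =
      ((∏ p ∈ s, p : ℕ) : ℝ) * ∏ p ∈ s, ((1 - (A.image (· % (p : ℤ))).card / (p : ℝ)) *
        (1 - 1 / (p : ℝ))⁻¹ ^ A.card) := by
  have : ∀ c : ℤ, sieveWeight s A c = (∏ p ∈ s, (1 - 1 / (p : ℝ))) ^ (-(A.card : ℤ)) *
      (if Avoids s A c then (1 : ℝ) else 0) := fun c => by simp [sieveWeight]
  simp only [this]
  rw [← Finset.mul_sum, sum_avoids s hs, Finset.prod_mul_distrib, zpow_neg, zpow_natCast,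
    Finset.prod_pow, Finset.prod_inv_distrib, inv_pow, ← mul_assoc, mul_comm]
  congr 1
  rw [Nat.cast_prod, ← Finset.prod_mul_distrib]
  refine Finset.prod_congr rfl fun p hp => ?_
  have : (p : ℝ) ≠ 0 := by exact_mod_cast (hs p hp).ne_zero
  field_simp

lemma sum_sieveWeight_ge {s : Finset ℕ} (hs : ∀ p ∈ s, p.Prime) {T : ℝ} (hT : 0 < T)
    (hsT : ∀ p ∈ s, T < p) {A : Finset ℤ} {J : ℕ} (hA : A.card ≤ J) (hJ : (J : ℝ) ≤ T) :
    ((∏ p ∈ s, p : ℕ) : ℝ) * (1 - 2 * (J : ℝ) ^ 2 / T) ≤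
      ∑ c ∈ Finset.range (∏ p ∈ s, p), sieveWeight s A (c : ℤ) := by
  rw [sum_sieveWeight hs]
  refine mul_le_mul_of_nonneg_left ?_ (by positivity)
  have hAJ : (A.card : ℝ) ≤ J := by exact_mod_cast hA
  have hle1 : ∀ p ∈ s, (J : ℝ) ^ 2 * ((p : ℝ) ^ 2)⁻¹ ≤ 1 := fun p hp => by
    have hp0 : (0 : ℝ) < p := hT.trans (hsT p hp)
    rw [← div_eq_mul_inv, ← div_pow]
    exact pow_le_one₀ (by positivity) ((div_le_one hp0).2 (hJ.trans (hsT p hp).le))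
  calc 1 - 2 * (J : ℝ) ^ 2 / T
      ≤ 1 - ∑ p ∈ s, (J : ℝ) ^ 2 * ((p : ℝ) ^ 2)⁻¹ := by
        rw [← Finset.mul_sum]
        have := mul_le_mul_of_nonneg_left (sum_inv_sq_le_two_div hT hsT) (sq_nonneg (J : ℝ))
        have e : 2 * (J : ℝ) ^ 2 / T = (J : ℝ) ^ 2 * (2 / T) := by ring
        linarith
    _ ≤ ∏ p ∈ s, (1 - (J : ℝ) ^ 2 * ((p : ℝ) ^ 2)⁻¹) :=
        one_sub_sum_le_prod_one_sub s _ (fun _ _ => by positivity) hle1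
    _ ≤ _ := by
        refine Finset.prod_le_prod (fun p hp => sub_nonneg.2 (hle1 p hp)) fun p hp => ?_
        have hp0 : (0 : ℝ) < p := hT.trans (hsT p hp)
        have hcard : ((A.image (· % (p : ℤ))).card : ℝ) ≤ A.card := by
          exact_mod_cast Finset.card_image_le
        have hkp : (A.card : ℝ) / p ≤ 1 :=
          (div_le_one hp0).2 ((hAJ.trans hJ).trans (hsT p hp).le)
        have h1 : 1 + (A.card : ℝ) / p ≤ (1 - 1 / (p : ℝ))⁻¹ ^ A.card := by
          have h2 : 1 + 1 / (p : ℝ) ≤ (1 - 1 / (p : ℝ))⁻¹ := by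
            rw [le_inv_comm₀ (by positivity) (one_sub_inv_pos (hs p hp)), ← one_div,
              le_div_iff₀ (by positivity)]
            nlinarith [sq_nonneg (1 / (p : ℝ))]
          have h3 := one_add_mul_le_pow (a := 1 / (p : ℝ))
            (by have : (0 : ℝ) ≤ 1 / p := by positivity
                linarith) A.card
          calc 1 + (A.card : ℝ) / p = 1 + A.card * (1 / (p : ℝ)) := by ring
            _ ≤ _ := h3
            _ ≤ _ := pow_le_pow_left₀ (by positivity) h2 _
        calc 1 - (J : ℝ) ^ 2 * ((p : ℝ) ^ 2)⁻¹ ≤ 1 - (A.card : ℝ) ^ 2 * ((p : ℝ) ^ 2)⁻¹ := by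
              gcongr
          _ = (1 - A.card / (p : ℝ)) * (1 + A.card / (p : ℝ)) := by field_simp; ring
          _ ≤ (1 - A.card / (p : ℝ)) * (1 - 1 / (p : ℝ))⁻¹ ^ A.card :=
              mul_le_mul_of_nonneg_left h1 (sub_nonneg.2 hkp)
          _ ≤ _ := by
              have : 0 ≤ (1 - 1 / (p : ℝ))⁻¹ ^ A.card :=
                pow_nonneg (inv_nonneg.2 (one_sub_inv_pos (hs p hp)).le) _
              gcongr

lemma sum_sieveWeight_mul_le {s : Finset ℕ} (hs : ∀ p ∈ s, p.Prime) (A₁ A₂ : Finset ℤ)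
    (e : ℕ → ℕ)
    (he : ∀ p ∈ s, A₁.card + A₂.card ≤ ((A₁ ∪ A₂).image (· % (p : ℤ))).card + e p) :
    ∑ c ∈ Finset.range (∏ p ∈ s, p), sieveWeight s A₁ (c : ℤ) * sieveWeight s A₂ (c : ℤ) ≤
      ((∏ p ∈ s, p : ℕ) : ℝ) * Real.exp (∑ p ∈ s, e p * (2 / (p : ℝ))) := by
  set σ := ∏ p ∈ s, (1 - 1 / (p : ℝ)) with hσ
  have h1 : ∀ c : ℤ, sieveWeight s A₁ c * sieveWeight s A₂ c =
      σ⁻¹ ^ (A₁.card + A₂.card) * (if Avoids s (A₁ ∪ A₂) c then (1 : ℝ) else 0) := fun c => by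
    have : Avoids s (A₁ ∪ A₂) c ↔ Avoids s A₁ c ∧ Avoids s A₂ c := by
      simp only [Avoids, Finset.mem_union, or_imp, forall_and]
    simp only [sieveWeight, ← hσ, this, zpow_neg, zpow_natCast, inv_pow, pow_add]
    rw [ite_zero_mul_ite_zero, mul_ite, mul_one, mul_zero]
  simp only [h1]
  rw [← Finset.mul_sum, sum_avoids s hs, hσ, ← Finset.prod_inv_distrib, ← Finset.prod_pow,
    ← Finset.prod_mul_distrib, Nat.cast_prod, Real.exp_sum, ← Finset.prod_mul_distrib]
  have hcard : ∀ p ∈ s, ((A₁ ∪ A₂).image (· % (p : ℤ))).card ≤ p := fun p hp => by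
    have hp0 : (0 : ℤ) < p := by exact_mod_cast (hs p hp).pos
    calc _ ≤ (Finset.Ico (0 : ℤ) p).card := by
          refine Finset.card_le_card fun r hr => ?_
          obtain ⟨m, _, rfl⟩ := Finset.mem_image.1 hr
          exact Finset.mem_Ico.2 ⟨Int.emod_nonneg _ hp0.ne', Int.emod_lt_of_pos _ hp0⟩
      _ = p := by simp
  refine Finset.prod_le_prod (fun p hp => ?_) fun p hp => ?_
  · refine mul_nonneg (pow_nonneg (inv_nonneg.2 (one_sub_inv_pos (hs p hp)).le) _) ?_
    rw [sub_nonneg]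
    exact_mod_cast hcard p hp
  · have hp0 : (0 : ℝ) < p := by exact_mod_cast (hs p hp).pos
    have hpos := one_sub_inv_pos (hs p hp)
    set j := ((A₁ ∪ A₂).image (· % (p : ℤ))).card with hj
    have hone : 1 ≤ (1 - 1 / (p : ℝ))⁻¹ := by
      rw [one_le_inv₀ hpos]
      have : (0 : ℝ) ≤ 1 / p := by positivity
      linarith
    have hbern : 1 - j / (p : ℝ) ≤ (1 - 1 / (p : ℝ)) ^ j := by
      have := one_add_mul_le_pow (a := -(1 / (p : ℝ))) (by
        have : 1 / (p : ℝ) ≤ 1 := by linarith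
        linarith) j
      calc 1 - j / (p : ℝ) = 1 + j * (-(1 / (p : ℝ))) := by ring
        _ ≤ _ := this
        _ = _ := by rw [← sub_eq_add_neg]
    calc (1 - 1 / (p : ℝ))⁻¹ ^ (A₁.card + A₂.card) * ((p : ℝ) - j)
        ≤ (1 - 1 / (p : ℝ))⁻¹ ^ (j + e p) * ((p : ℝ) - j) := by
          refine mul_le_mul_of_nonneg_right (pow_le_pow_right₀ hone (he p hp)) ?_
          rw [sub_nonneg]
          exact_mod_cast hcard p hp
      _ = (1 - 1 / (p : ℝ))⁻¹ ^ (j + e p) * (p * (1 - j / (p : ℝ))) := by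
          congr 1; field_simp
      _ ≤ (1 - 1 / (p : ℝ))⁻¹ ^ (j + e p) * (p * (1 - 1 / (p : ℝ)) ^ j) := by gcongr
      _ = p * (1 - 1 / (p : ℝ))⁻¹ ^ e p := by
          rw [pow_add, inv_pow, inv_pow]
          generalize 1 - 1 / (p : ℝ) = u at hpos
          field_simp
      _ ≤ p * Real.exp (2 / p) ^ e p := by
          gcongr
          exact inv_one_sub_inv_le_exp (hs p hp)
      _ = _ := by rw [← Real.exp_nat_mul]

lemma card_image_emod_eq {p q J : ℕ} (hp : p.Prime) (hpq : ¬ p ∣ q) (hJ : J < p) {n : ℤ}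
    {A : Finset ℤ} (hA : A ⊆ (Finset.Icc 1 J).image fun h : ℕ => n + (q : ℤ) * h) :
    (A.image (· % (p : ℤ))).card = A.card := by
  refine Finset.card_image_of_injOn fun a ha b hb hab => ?_
  obtain ⟨h₁, hh₁, rfl⟩ := Finset.mem_image.1 (hA ha)
  obtain ⟨h₂, hh₂, rfl⟩ := Finset.mem_image.1 (hA hb)
  rw [Finset.mem_Icc] at hh₁ hh₂
  have h3 : (p : ℤ) ∣ (q : ℤ) * ((h₂ : ℤ) - h₁) := by
    have := Int.ModEq.dvd hab
    ring_nf at this ⊢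
    exact this
  have h4 : (p : ℤ) ∣ (h₂ : ℤ) - h₁ :=
    ((Nat.prime_iff_prime_int.1 hp).dvd_or_dvd h3).resolve_left
      fun h => hpq (Int.natCast_dvd_natCast.1 h)
  have h5 : (h₂ : ℤ) - h₁ = 0 := by
    refine Int.eq_zero_of_abs_lt_dvd h4 ?_
    rw [abs_lt]
    constructor <;> omega
  have : (h₁ : ℤ) = h₂ := by omega
  simp only [this]

lemma card_add_card_le_of_subset_progression {p q J : ℕ} (hp : p.Prime) (hpq : ¬ p ∣ q)
    (hJ : J < p) {n₁ n₂ : ℤ} {A₁ A₂ : Finset ℤ}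
    (hA₁ : A₁ ⊆ (Finset.Icc 1 J).image fun h : ℕ => n₁ + (q : ℤ) * h)
    (hA₂ : A₂ ⊆ (Finset.Icc 1 J).image fun h : ℕ => n₂ + (q : ℤ) * h) :
    A₁.card + A₂.card ≤ ((A₁ ∪ A₂).image (· % (p : ℤ))).card +
      ((Finset.Icc 1 J ×ˢ Finset.Icc 1 J).filter fun h : ℕ × ℕ =>
        (p : ℤ) ∣ n₁ - n₂ + q * ((h.1 : ℤ) - h.2)).card := by
  rw [← card_image_emod_eq hp hpq hJ hA₁, ← card_image_emod_eq hp hpq hJ hA₂,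
    ← Finset.card_union_add_card_inter, ← Finset.image_union]
  gcongr
  refine (Finset.card_le_card (t := Finset.image
    (fun h : ℕ × ℕ => (n₁ + (q : ℤ) * h.1) % p) _) ?_).trans Finset.card_image_le
  intro r hr
  obtain ⟨hr₁, hr₂⟩ := Finset.mem_inter.1 hr
  obtain ⟨a, ha, rfl⟩ := Finset.mem_image.1 hr₁
  obtain ⟨b, hb, hab⟩ := Finset.mem_image.1 hr₂
  obtain ⟨h₁, hh₁, rfl⟩ := Finset.mem_image.1 (hA₁ ha)
  obtain ⟨h₂, hh₂, rfl⟩ := Finset.mem_image.1 (hA₂ hb)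
  refine Finset.mem_image.2 ⟨(h₁, h₂), Finset.mem_filter.2
    ⟨Finset.mem_product.2 ⟨hh₁, hh₂⟩, ?_⟩, rfl⟩
  have := Int.ModEq.dvd hab
  have e : n₁ - n₂ + (q : ℤ) * ((h₁ : ℤ) - h₂) = n₁ + q * h₁ - (n₂ + q * h₂) := by ring
  rw [e]
  exact this

lemma sum_sieveWeight_mul_le_exp {s : Finset ℕ} (hs : ∀ p ∈ s, p.Prime) {q J : ℕ}
    (hq : ∀ p ∈ s, ¬ p ∣ q) (hJ : ∀ p ∈ s, J < p) {n₁ n₂ : ℤ} {A₁ A₂ : Finset ℤ}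
    (hA₁ : A₁ ⊆ (Finset.Icc 1 J).image fun h : ℕ => n₁ + (q : ℤ) * h)
    (hA₂ : A₂ ⊆ (Finset.Icc 1 J).image fun h : ℕ => n₂ + (q : ℤ) * h) :
    ∑ c ∈ Finset.range (∏ p ∈ s, p), sieveWeight s A₁ (c : ℤ) * sieveWeight s A₂ (c : ℤ) ≤
      ((∏ p ∈ s, p : ℕ) : ℝ) * Real.exp (∑ h ∈ Finset.Icc 1 J ×ˢ Finset.Icc 1 J,
        ∑ p ∈ s, if (p : ℤ) ∣ n₁ - n₂ + q * ((h.1 : ℤ) - h.2) then 2 / (p : ℝ) else 0) := by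
  refine (sum_sieveWeight_mul_le hs A₁ A₂ _ fun p hp =>
    card_add_card_le_of_subset_progression (hs p hp) (hq p hp) (hJ p hp) hA₁ hA₂).trans_eq ?_
  rw [Finset.sum_comm]
  congr 2
  refine Finset.sum_congr rfl fun p _ => ?_
  rw [← Finset.sum_filter, Finset.sum_const, nsmul_eq_mul]

/-- A truncated multiplicative divisor sum, with coefficient `B / p` at each prime `p`. -/
noncomputable def divisorProd (s : Finset ℕ) (B : ℝ) (l : ℤ) : ℝ :=
  ∏ p ∈ s, (1 + if (p : ℤ) ∣ l then B / (p : ℝ) else 0)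

lemma one_le_divisorProd (s : Finset ℕ) {B : ℝ} (hB : 0 ≤ B) (l : ℤ) :
    1 ≤ divisorProd s B l := by
  rw [← Finset.prod_const_one (s := s)]
  refine Finset.prod_le_prod (fun _ _ => zero_le_one) fun p _ => ?_
  have : (0 : ℝ) ≤ if (p : ℤ) ∣ l then B / (p : ℝ) else 0 := by positivity
  linarith

lemma sum_divisorProd_le {s : Finset ℕ} (hs : ∀ p ∈ s, p.Prime) {B : ℝ} (hB : 0 ≤ B) (R : ℕ) :
    ∑ l ∈ Finset.Icc 1 R, divisorProd s B (l : ℤ) ≤ R * ∏ p ∈ s, (1 + B * ((p : ℝ) ^ 2)⁻¹) := by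
  unfold divisorProd
  simp only [Finset.prod_one_add]
  rw [Finset.sum_comm, Finset.mul_sum]
  refine Finset.sum_le_sum fun t ht => ?_
  rw [Finset.mem_powerset] at ht
  have h1 : ∀ l : ℕ, (∏ p ∈ t, if (p : ℤ) ∣ (l : ℤ) then B / (p : ℝ) else 0) ≤
      if (∏ p ∈ t, p) ∣ l then ∏ p ∈ t, B / (p : ℝ) else 0 := fun l => by
    split_ifs with h
    · refine Finset.prod_le_prod (fun p _ => by positivity) fun p _ => ?_
      split_ifs
      · exact le_rfl
      · positivity
    · refine le_of_eq ?_
      by_contra hne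
      refine h (Finset.prod_primes_dvd l (fun p hp => (hs p (ht hp)).prime) fun p hp => ?_)
      by_contra hpl
      exact hne (Finset.prod_eq_zero hp (if_neg fun h => hpl (Int.natCast_dvd_natCast.1 h)))
  refine (Finset.sum_le_sum fun l _ => h1 l).trans ?_
  rw [← Finset.sum_filter, Finset.sum_const, nsmul_eq_mul, Finset.prod_mul_distrib,
    Finset.prod_div_distrib]
  have hpos : (0 : ℝ) < ((∏ p ∈ t, p : ℕ) : ℝ) := by
    exact_mod_cast Finset.prod_pos fun p hp => (hs p (ht hp)).pos
  have h2 : (((Finset.Icc 1 R).filter fun l => (∏ p ∈ t, p) ∣ l).card : ℝ) ≤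
      R / ((∏ p ∈ t, p : ℕ) : ℝ) := by
    have : ((Finset.Icc 1 R).filter fun l => (∏ p ∈ t, p) ∣ l).card = R / (∏ p ∈ t, p) := by
      have := Nat.Ioc_filter_dvd_card_eq_div R (∏ p ∈ t, p)
      rwa [← Finset.Icc_add_one_left_eq_Ioc] at this
    rw [this]
    exact Nat.cast_div_le
  calc _ ≤ R / ((∏ p ∈ t, p : ℕ) : ℝ) * ((∏ p ∈ t, B) / ∏ p ∈ t, (p : ℝ)) := by
        refine mul_le_mul_of_nonneg_right h2 ?_
        exact div_nonneg (Finset.prod_nonneg fun _ _ => hB) (by positivity)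
    _ = _ := by
        rw [Finset.prod_inv_distrib, Finset.prod_pow, Nat.cast_prod]
        rw [Nat.cast_prod] at hpos
        field_simp

lemma prod_one_add_inv_sq_le_exp {s : Finset ℕ} {B T : ℝ} (hB : 0 ≤ B) (hT : 0 < T)
    (hsT : ∀ p ∈ s, T < p) :
    ∏ p ∈ s, (1 + B * ((p : ℝ) ^ 2)⁻¹) ≤ Real.exp (2 * B / T) := by
  calc ∏ p ∈ s, (1 + B * ((p : ℝ) ^ 2)⁻¹) ≤ ∏ p ∈ s, Real.exp (B * ((p : ℝ) ^ 2)⁻¹) :=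
        Finset.prod_le_prod (fun _ _ => by positivity) fun p _ => by
          rw [add_comm]; exact Real.add_one_le_exp _
    _ = Real.exp (B * ∑ p ∈ s, ((p : ℝ) ^ 2)⁻¹) := by rw [← Real.exp_sum, Finset.mul_sum]
    _ ≤ Real.exp (2 * B / T) := by
        rw [Real.exp_le_exp]
        calc _ ≤ B * (2 / T) :=
              mul_le_mul_of_nonneg_left (sum_inv_sq_le_two_div hT hsT) hB
          _ = _ := by ring

lemma sum_divisorProd_sub_one_le {s : Finset ℕ} (hs : ∀ p ∈ s, p.Prime) {B T : ℝ} (hB : 0 ≤ B)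
    (hT : 0 < T) (hsT : ∀ p ∈ s, T < p) (R : ℕ) (S : Finset ℤ)
    (hS : ∀ l ∈ S, l ≠ 0 ∧ |l| ≤ R) :
    ∑ l ∈ S, (divisorProd s B l - 1) ≤ 2 * R * (Real.exp (2 * B / T) - 1) := by
  have hnat : ∑ l ∈ Finset.Icc 1 R, (divisorProd s B (l : ℤ) - 1) ≤
      R * (Real.exp (2 * B / T) - 1) := by
    rw [Finset.sum_sub_distrib]
    have := (sum_divisorProd_le hs hB R).trans
      (mul_le_mul_of_nonneg_left (prod_one_add_inv_sq_le_exp hB hT hsT) (Nat.cast_nonneg R))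
    simp only [Finset.sum_const, Nat.card_Icc, Nat.add_sub_cancel, nsmul_eq_mul, mul_one]
    linarith
  have habs : ∀ l : ℤ, divisorProd s B l = divisorProd s B ((l.natAbs : ℕ) : ℤ) := fun l => by
    simp [divisorProd]
  have hhalf : ∀ S' ⊆ S, Set.InjOn Int.natAbs (S' : Set ℤ) →
      ∑ l ∈ S', (divisorProd s B l - 1) ≤ R * (Real.exp (2 * B / T) - 1) := by
    intro S' hS' hinj
    refine le_trans ?_ hnat
    calc ∑ l ∈ S', (divisorProd s B l - 1)
        = ∑ l ∈ S'.image Int.natAbs, (divisorProd s B ((l : ℕ) : ℤ) - 1) := by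
          rw [Finset.sum_image hinj]
          exact Finset.sum_congr rfl fun l _ => by rw [habs l]
      _ ≤ _ := by
          refine Finset.sum_le_sum_of_subset_of_nonneg ?_ fun l _ _ =>
            sub_nonneg.2 (one_le_divisorProd s hB _)
          intro k hk
          obtain ⟨l, hl, rfl⟩ := Finset.mem_image.1 hk
          have := hS l (hS' hl)
          rw [Int.abs_eq_natAbs] at this
          rw [Finset.mem_Icc]
          omega
  rw [← Finset.sum_filter_add_sum_filter_not S (fun l => 0 < l)]
  have h1 := hhalf (S.filter fun l => 0 < l) (Finset.filter_subset _ _) (by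
    intro a ha b hb hab
    simp only [Finset.coe_filter, Set.mem_ofPred_eq] at ha hb
    omega)
  have h2 := hhalf (S.filter fun l => ¬ 0 < l) (Finset.filter_subset _ _) (by
    intro a ha b hb hab
    simp only [Finset.coe_filter, Set.mem_ofPred_eq] at ha hb
    omega)
  linarith

lemma exp_sub_one_le_mul {u v : ℝ} (hu : 0 ≤ u) (huv : u ≤ v) :
    Real.exp u - 1 ≤ u * Real.exp v := by
  have h := Real.add_one_le_exp (-u)
  have h2 : Real.exp u * Real.exp (-u) = 1 := by rw [← Real.exp_add]; simp
  have h3 := Real.exp_le_exp.2 huv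
  nlinarith [mul_le_mul_of_nonneg_left h (Real.exp_pos u).le, mul_le_mul_of_nonneg_left h3 hu]

lemma exp_sum_le_avg_divisorProd {s : Finset ℕ} {T D : ℝ} (hT : 0 < T) (hsT : ∀ p ∈ s, T < p)
    {J : ℕ} (hJ0 : J ≠ 0) (hJD : (J : ℝ) ^ 2 ≤ D * T) (l : ℕ × ℕ → ℤ) :
    Real.exp (∑ h ∈ Finset.Icc 1 J ×ˢ Finset.Icc 1 J,
        ∑ p ∈ s, if (p : ℤ) ∣ l h then 2 / (p : ℝ) else 0) ≤
      ∑ h ∈ Finset.Icc 1 J ×ˢ Finset.Icc 1 J, ((J : ℝ) ^ 2)⁻¹ *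
        divisorProd s (2 * (J : ℝ) ^ 2 * Real.exp (2 * D)) (l h) := by
  set Λ := Finset.Icc 1 J ×ˢ Finset.Icc 1 J with hΛ
  have hJpos : (0 : ℝ) < (J : ℝ) ^ 2 := by positivity
  have hcard : (Λ.card : ℝ) = (J : ℝ) ^ 2 := by
    simp [hΛ, Finset.card_product, sq]
  have hconv := convexOn_exp.map_sum_le (t := Λ) (w := fun _ => ((J : ℝ) ^ 2)⁻¹)
    (p := fun h => (J : ℝ) ^ 2 * ∑ p ∈ s, if (p : ℤ) ∣ l h then 2 / (p : ℝ) else 0)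
    (fun _ _ => by positivity)
    (by rw [Finset.sum_const, nsmul_eq_mul, hcard, mul_inv_cancel₀ hJpos.ne'])
    (fun _ _ => Set.mem_univ _)
  simp only [smul_eq_mul, inv_mul_cancel_left₀ hJpos.ne'] at hconv
  refine hconv.trans (Finset.sum_le_sum fun h _ => ?_)
  refine mul_le_mul_of_nonneg_left ?_ (by positivity)
  rw [Finset.mul_sum, Real.exp_sum]
  refine Finset.prod_le_prod (fun _ _ => (Real.exp_pos _).le) fun p hp => ?_
  split_ifs
  · have hp0 : (0 : ℝ) < p := hT.trans (hsT p hp)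
    have hD0 : 0 ≤ D := by
      by_contra hneg
      nlinarith
    have h1 : (J : ℝ) ^ 2 * (2 / p) ≤ 2 * D := by
      rw [mul_div_assoc', div_le_iff₀ hp0]
      nlinarith [mul_le_mul_of_nonneg_left (hsT p hp).le hD0]
    have h2 := exp_sub_one_le_mul (by positivity) h1
    calc _ ≤ 1 + (J : ℝ) ^ 2 * (2 / p) * Real.exp (2 * D) := by linarith
      _ = _ := by ring
  · simp

/-- Second moment bound for the sum of the normalised sieve weights of the progressions
`n + q, …, n + J q`, as `n` ranges over `I`. -/
lemma sum_sieveWeight_variance_le {s : Finset ℕ} (hs : ∀ p ∈ s, p.Prime) {T D : ℝ} (hT : 0 < T)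
    (hsT : ∀ p ∈ s, T < p) {q J R : ℕ} (hq : ∀ p ∈ s, ¬ p ∣ q) (hJ0 : J ≠ 0)
    (hJT : (J : ℝ) ≤ T) (hJD : (J : ℝ) ^ 2 ≤ D * T) {A : ℤ → Finset ℤ}
    (hA : ∀ n, A n ⊆ (Finset.Icc 1 J).image fun h : ℕ => n + (q : ℤ) * h) (I : Finset ℤ)
    (hR : ∀ n₁ ∈ I, ∀ n₂ ∈ I, ∀ h₁ ∈ Finset.Icc 1 J, ∀ h₂ ∈ Finset.Icc 1 J,
      |n₁ - n₂ + q * ((h₁ : ℤ) - h₂)| ≤ R) :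
    ∑ c ∈ Finset.range (∏ p ∈ s, p),
        (∑ n ∈ I, sieveWeight s (A n) (c : ℤ) - (I.card : ℝ)) ^ 2 ≤
      ((∏ p ∈ s, p : ℕ) : ℝ) * (I.card * (
        2 * R * (Real.exp (2 * (2 * (J : ℝ) ^ 2 * Real.exp (2 * D)) / T) - 1) +
        (J : ℝ) ^ 2 * Real.exp (J * ∑ p ∈ s, 2 / (p : ℝ)) ^ 2 +
        4 * I.card * (J : ℝ) ^ 2 / T)) := by
  set W := ∏ p ∈ s, p with hW
  set B := 2 * (J : ℝ) ^ 2 * Real.exp (2 * D) with hBdef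
  set E := Real.exp (J * ∑ p ∈ s, 2 / (p : ℝ)) with hE
  set Λ := Finset.Icc 1 J ×ˢ Finset.Icc 1 J with hΛ
  have hB : 0 ≤ B := by positivity
  have hJp : ∀ p ∈ s, J < p := fun p hp => by
    exact_mod_cast hJT.trans_lt (hsT p hp)
  have hAcard : ∀ n, (A n).card ≤ J := fun n =>
    (Finset.card_le_card (hA n)).trans (Finset.card_image_le.trans (by simp))
  have hΛcard : (Λ.card : ℝ) = (J : ℝ) ^ 2 := by
    simp [hΛ, Finset.card_product, sq]
  have hJpos : (0 : ℝ) < (J : ℝ) ^ 2 := by positivity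
  let pair : ℤ → ℤ → ℝ := fun n₁ n₂ => ∑ c ∈ Finset.range W,
    sieveWeight s (A n₁) (c : ℤ) * sieveWeight s (A n₂) (c : ℤ)
  let l : ℤ → ℤ → ℕ × ℕ → ℤ := fun n₁ n₂ h => n₁ - n₂ + q * ((h.1 : ℤ) - h.2)
  have hrow : ∀ n₁ ∈ I, ∑ n₂ ∈ I, pair n₁ n₂ ≤
      W * (I.card + 2 * R * (Real.exp (2 * B / T) - 1) + (J : ℝ) ^ 2 * E ^ 2) := by
    intro n₁ hn₁
    rw [← Finset.sum_filter_add_sum_filter_not I (fun n₂ => ∀ h ∈ Λ, l n₁ n₂ h ≠ 0)]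
    set good := I.filter (fun n₂ => ∀ h ∈ Λ, l n₁ n₂ h ≠ 0) with hgood
    set bad := I.filter (fun n₂ => ¬ ∀ h ∈ Λ, l n₁ n₂ h ≠ 0) with hbad
    have hgoodsum : ∑ n₂ ∈ good, pair n₁ n₂ ≤
        W * (I.card + 2 * R * (Real.exp (2 * B / T) - 1)) := by
      calc ∑ n₂ ∈ good, pair n₁ n₂
          ≤ ∑ n₂ ∈ good, (W : ℝ) * ∑ h ∈ Λ, ((J : ℝ) ^ 2)⁻¹ * divisorProd s B (l n₁ n₂ h) := by
            refine Finset.sum_le_sum fun n₂ _ => ?_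
            refine (sum_sieveWeight_mul_le_exp hs hq hJp (hA n₁) (hA n₂)).trans ?_
            exact mul_le_mul_of_nonneg_left
              (exp_sum_le_avg_divisorProd hT hsT hJ0 hJD (l n₁ n₂)) (Nat.cast_nonneg _)
        _ = (W : ℝ) * ∑ h ∈ Λ, ((J : ℝ) ^ 2)⁻¹ *
              (good.card + ∑ n₂ ∈ good, (divisorProd s B (l n₁ n₂ h) - 1)) := by
            rw [← Finset.mul_sum, Finset.sum_comm]
            congr 1
            refine Finset.sum_congr rfl fun h _ => ?_
            rw [Finset.sum_sub_distrib, Finset.sum_const, nsmul_eq_mul, mul_one,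
              add_sub_cancel, Finset.mul_sum]
        _ ≤ (W : ℝ) * ∑ h ∈ Λ, ((J : ℝ) ^ 2)⁻¹ *
              (I.card + 2 * R * (Real.exp (2 * B / T) - 1)) := by
            refine mul_le_mul_of_nonneg_left (Finset.sum_le_sum fun h hh => ?_)
              (Nat.cast_nonneg _)
            refine mul_le_mul_of_nonneg_left (add_le_add ?_ ?_) (by positivity)
            · exact_mod_cast Finset.card_le_card (Finset.filter_subset _ _)
            · have hinj : Set.InjOn (fun n₂ => l n₁ n₂ h) (good : Set ℤ) := by
                intro a _ b _ hab
                simp only [l] at hab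
                linarith
              rw [← Finset.sum_image (g := fun n₂ => l n₁ n₂ h)
                (f := fun k => divisorProd s B k - 1) hinj]
              refine sum_divisorProd_sub_one_le hs hB hT hsT R _ fun k hk => ?_
              obtain ⟨n₂, hn₂, rfl⟩ := Finset.mem_image.1 hk
              rw [hgood, Finset.mem_filter] at hn₂
              have hh' := Finset.mem_product.1 hh
              exact ⟨hn₂.2 h hh, hR n₁ hn₁ n₂ hn₂.1 _ hh'.1 _ hh'.2⟩
        _ = _ := by
            rw [Finset.sum_const, nsmul_eq_mul, hΛcard, mul_inv_cancel_left₀ hJpos.ne']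
    have hbadcard : (bad.card : ℝ) ≤ (J : ℝ) ^ 2 := by
      rw [← hΛcard]
      norm_cast
      refine (Finset.card_le_card (t := Λ.image
        fun h => n₁ + (q : ℤ) * ((h.1 : ℤ) - h.2)) fun n₂ hn₂ => ?_).trans Finset.card_image_le
      rw [hbad, Finset.mem_filter] at hn₂
      obtain ⟨_, hn₂⟩ := hn₂
      push Not at hn₂
      obtain ⟨h, hh, hl⟩ := hn₂
      refine Finset.mem_image.2 ⟨h, hh, ?_⟩
      simp only [l] at hl
      linarith
    have hbadsum : ∑ n₂ ∈ bad, pair n₁ n₂ ≤ W * ((J : ℝ) ^ 2 * E ^ 2) := by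
      calc ∑ n₂ ∈ bad, pair n₁ n₂ ≤ ∑ n₂ ∈ bad, (W : ℝ) * E ^ 2 := by
            refine Finset.sum_le_sum fun n₂ _ => ?_
            calc pair n₁ n₂ ≤ ∑ c ∈ Finset.range W, E * E :=
                  Finset.sum_le_sum fun c _ => mul_le_mul (sieveWeight_le hs (hAcard _) _)
                    (sieveWeight_le hs (hAcard _) _) (sieveWeight_nonneg hs _ _)
                    (Real.exp_pos _).le
              _ = _ := by simp [sq]
        _ = bad.card * (W * E ^ 2) := by rw [Finset.sum_const, nsmul_eq_mul]
        _ ≤ (J : ℝ) ^ 2 * (W * E ^ 2) := by gcongr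
        _ = _ := by ring
    linarith
  have hsecond : ∑ c ∈ Finset.range W, (∑ n ∈ I, sieveWeight s (A n) (c : ℤ)) ^ 2 ≤
      I.card * (W * (I.card + 2 * R * (Real.exp (2 * B / T) - 1) + (J : ℝ) ^ 2 * E ^ 2)) := by
    calc _ = ∑ n₁ ∈ I, ∑ n₂ ∈ I, pair n₁ n₂ := by
          simp only [sq, Finset.sum_mul_sum, pair]
          rw [Finset.sum_comm]
          exact Finset.sum_congr rfl fun n₁ _ => Finset.sum_comm
      _ ≤ _ := by
          refine (Finset.sum_le_sum hrow).trans_eq ?_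
          rw [Finset.sum_const, nsmul_eq_mul]
  have hfirst : I.card * (W * (1 - 2 * (J : ℝ) ^ 2 / T)) ≤
      ∑ c ∈ Finset.range W, ∑ n ∈ I, sieveWeight s (A n) (c : ℤ) := by
    rw [Finset.sum_comm, ← nsmul_eq_mul, ← Finset.sum_const]
    exact Finset.sum_le_sum fun n _ => sum_sieveWeight_ge hs hT hsT (hAcard n) hJT
  have hexpand : ∑ c ∈ Finset.range W, (∑ n ∈ I, sieveWeight s (A n) (c : ℤ) - (I.card : ℝ)) ^ 2 =
      ∑ c ∈ Finset.range W, (∑ n ∈ I, sieveWeight s (A n) (c : ℤ)) ^ 2 -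
        2 * I.card * ∑ c ∈ Finset.range W, ∑ n ∈ I, sieveWeight s (A n) (c : ℤ) +
        W * (I.card : ℝ) ^ 2 := by
    rw [Finset.mul_sum, ← Finset.sum_sub_distrib]
    have : (W : ℝ) * (I.card : ℝ) ^ 2 = ∑ c ∈ Finset.range W, (I.card : ℝ) ^ 2 := by simp
    rw [this, ← Finset.sum_add_distrib]
    exact Finset.sum_congr rfl fun c _ => by ring
  rw [hexpand]
  have := mul_le_mul_of_nonneg_left hfirst (by positivity : (0 : ℝ) ≤ 2 * I.card)
  have e1 : 4 * (I.card : ℝ) * (J : ℝ) ^ 2 / T = 2 * I.card * (2 * (J : ℝ) ^ 2 / T) := by ring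
  rw [e1]
  nlinarith [this, hsecond]

lemma mul_card_primes_dyadic_le (m : ℕ) :
    m * ((Finset.Ioc (2 ^ m) (2 ^ (m + 1))).filter Nat.Prime).card ≤ 2 ^ (m + 2) := by
  set S := (Finset.Ioc (2 ^ m) (2 ^ (m + 1))).filter Nat.Prime with hS
  have h1 : (2 ^ m) ^ S.card ≤ ∏ p ∈ S, p :=
    Finset.pow_card_le_prod _ _ _ fun p hp =>
      (Finset.mem_Ioc.1 (Finset.mem_filter.1 hp).1).1.le
  have h2 : ∏ p ∈ S, p ≤ primorial (2 ^ (m + 1)) := by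
    refine Finset.prod_le_prod_of_subset_of_one_le' (fun p hp => ?_)
      fun p hp _ => (Finset.mem_filter.1 hp).2.one_le
    have := Finset.mem_Ioc.1 (Finset.mem_filter.1 hp).1
    exact Finset.mem_filter.2 ⟨Finset.mem_range.2 (by omega), (Finset.mem_filter.1 hp).2⟩
  have h3 := (h1.trans h2).trans (primorial_le_four_pow _)
  rw [← pow_mul, show 4 = 2 ^ 2 by norm_num, ← pow_mul,
    Nat.pow_le_pow_iff_right (by norm_num)] at h3
  calc _ ≤ _ := h3
    _ = _ := by ring

lemma sum_inv_primes_two_pow_le (m : ℕ) :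
    ∑ p ∈ (Finset.Icc 1 (2 ^ m)).filter Nat.Prime, 1 / (p : ℝ) ≤ 8 * (harmonic m : ℝ) := by
  induction m with
  | zero =>
    have : (Finset.Icc 1 (2 ^ 0)).filter Nat.Prime = ∅ := by decide
    rw [this]
    simp
  | succ m ih =>
    have hunion : (Finset.Icc 1 (2 ^ (m + 1))).filter Nat.Prime =
        (Finset.Icc 1 (2 ^ m)).filter Nat.Prime ∪
          (Finset.Ioc (2 ^ m) (2 ^ (m + 1))).filter Nat.Prime := by
      rw [← Finset.filter_union]
      congr 1
      ext k
      have : 2 ^ m ≤ 2 ^ (m + 1) := Nat.pow_le_pow_right (by norm_num) (by omega)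
      have : 1 ≤ 2 ^ m := Nat.one_le_two_pow
      simp only [Finset.mem_Icc, Finset.mem_union, Finset.mem_Ioc]
      omega
    have hdisj : Disjoint ((Finset.Icc 1 (2 ^ m)).filter Nat.Prime)
        ((Finset.Ioc (2 ^ m) (2 ^ (m + 1))).filter Nat.Prime) := by
      rw [Finset.disjoint_left]
      intro k hk hk'
      have h1 := Finset.mem_Icc.1 (Finset.mem_filter.1 hk).1
      have h2 := Finset.mem_Ioc.1 (Finset.mem_filter.1 hk').1
      omega
    rw [hunion, Finset.sum_union hdisj, harmonic_succ]
    push_cast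
    have hblock : ∑ p ∈ (Finset.Ioc (2 ^ m) (2 ^ (m + 1))).filter Nat.Prime, 1 / (p : ℝ) ≤
        8 * ((m : ℝ) + 1)⁻¹ := by
      have hb : ∑ p ∈ (Finset.Ioc (2 ^ m) (2 ^ (m + 1))).filter Nat.Prime, 1 / (p : ℝ) ≤
          ((Finset.Ioc (2 ^ m) (2 ^ (m + 1))).filter Nat.Prime).card * (1 / (2 : ℝ) ^ m) := by
        rw [← nsmul_eq_mul]
        refine Finset.sum_le_card_nsmul _ _ _ fun p hp => ?_
        have h1 := (Finset.mem_Ioc.1 (Finset.mem_filter.1 hp).1).1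
        have : (2 : ℝ) ^ m ≤ p := by exact_mod_cast h1.le
        exact one_div_le_one_div_of_le (by positivity) this
      refine hb.trans ?_
      rcases Nat.eq_zero_or_pos m with rfl | hm
      · have : ((Finset.Ioc (2 ^ 0) (2 ^ (0 + 1))).filter Nat.Prime).card = 1 := by decide
        rw [this]
        norm_num
      · have h1 : (m : ℝ) * ((Finset.Ioc (2 ^ m) (2 ^ (m + 1))).filter Nat.Prime).card ≤
            2 ^ (m + 2) := by exact_mod_cast mul_card_primes_dyadic_le m
        set k : ℝ := (((Finset.Ioc (2 ^ m) (2 ^ (m + 1))).filter Nat.Prime).card : ℝ) with hk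
        have hm' : (1 : ℝ) ≤ m := by exact_mod_cast hm
        have hk0 : 0 ≤ k := Nat.cast_nonneg _
        rw [mul_one_div, ← div_eq_mul_inv, div_le_div_iff₀ (by positivity) (by positivity)]
        have : (2 : ℝ) ^ (m + 2) = 4 * 2 ^ m := by ring
        nlinarith
    linarith

lemma sum_inv_primes_le {s : Finset ℕ} (hs : ∀ p ∈ s, p.Prime) {L : ℝ} (hL : 1 ≤ L)
    (hsL : ∀ p ∈ s, (p : ℝ) ≤ Real.exp (2 * L)) :
    ∑ p ∈ s, 2 / (p : ℝ) ≤ 16 * (1 + Real.log (4 * L)) := by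
  set m := ⌈3 * L⌉₊ with hm
  have hm4 : (m : ℝ) ≤ 4 * L := by
    have := Nat.ceil_lt_add_one (by linarith : 0 ≤ 3 * L)
    linarith
  have hpow : Real.exp (2 * L) ≤ 2 ^ m := by
    have h1 : 2 * L ≤ m * Real.log 2 := by
      have h3 : 3 * L ≤ m := Nat.le_ceil _
      have := Real.log_two_gt_d9
      nlinarith
    calc Real.exp (2 * L) ≤ Real.exp (m * Real.log 2) := Real.exp_le_exp.2 h1
      _ = 2 ^ m := by rw [Real.exp_nat_mul, Real.exp_log (by norm_num)]
  have hsub : s ⊆ (Finset.Icc 1 (2 ^ m)).filter Nat.Prime := fun p hp => by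
    have : (p : ℝ) ≤ 2 ^ m := (hsL p hp).trans hpow
    exact Finset.mem_filter.2 ⟨Finset.mem_Icc.2 ⟨(hs p hp).one_le, by exact_mod_cast this⟩, hs p hp⟩
  have hm0 : (0 : ℝ) < m := by
    have : 3 * L ≤ m := Nat.le_ceil _
    linarith
  calc ∑ p ∈ s, 2 / (p : ℝ) = 2 * ∑ p ∈ s, 1 / (p : ℝ) := by
        rw [Finset.mul_sum]; exact Finset.sum_congr rfl fun _ _ => by ring
    _ ≤ 2 * (8 * (harmonic m : ℝ)) := by
        refine mul_le_mul_of_nonneg_left ?_ (by norm_num)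
        exact (Finset.sum_le_sum_of_subset_of_nonneg hsub fun _ _ _ => by positivity).trans
          (sum_inv_primes_two_pow_le m)
    _ ≤ 2 * (8 * (1 + Real.log m)) := by
        gcongr
        exact harmonic_le_one_add_log m
    _ ≤ 16 * (1 + Real.log (4 * L)) := by
        have := Real.log_le_log hm0 hm4
        linarith

/-- The logarithmic estimate that absorbs the diagonal terms of the second moment. -/
lemma eventually_rpow_mul_exp_le (a : ℝ) (k : ℝ) (hk : 0 < k) :
    ∀ᶠ L : ℝ in Filter.atTop,
      k ^ 2 * L ^ a * Real.exp (2 * (k * L ^ (1 / 2 : ℝ) * (16 * (1 + Real.log (4 * L))))) ≤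
        Real.exp L := by
  have hlog : ∀ᶠ L : ℝ in Filter.atTop, Real.log L ≤ L ^ (1 / 4 : ℝ) := by
    have := (isLittleO_log_rpow_atTop (by norm_num : (0 : ℝ) < 1 / 4)).bound one_pos
    filter_upwards [this, Filter.eventually_ge_atTop 1] with L hL hL1
    rw [one_mul, Real.norm_of_nonneg (Real.log_nonneg hL1),
      Real.norm_of_nonneg (by positivity)] at hL
    exact hL
  have hu : ∀ᶠ L : ℝ in Filter.atTop,
      max 3 (64 * k + |a| + 2 * |Real.log k|) ≤ L ^ (1 / 4 : ℝ) :=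
    (tendsto_rpow_atTop (by norm_num : (0 : ℝ) < 1 / 4)).eventually_ge_atTop _
  filter_upwards [hlog, hu, Filter.eventually_ge_atTop 1] with L hL1 hL2 hL3
  have hL0 : 0 < L := by linarith
  set u := L ^ (1 / 4 : ℝ) with hudef
  have hu4 : L = u ^ 4 := by
    rw [hudef, ← Real.rpow_natCast, ← Real.rpow_mul hL0.le]; norm_num
  have hu2 : L ^ (1 / 2 : ℝ) = u ^ 2 := by
    rw [hudef, ← Real.rpow_natCast, ← Real.rpow_mul hL0.le]; norm_num
  have h3 : 3 ≤ u := (le_max_left _ _).trans hL2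
  have h4 : 64 * k + |a| + 2 * |Real.log k| ≤ u := (le_max_right _ _).trans hL2
  have hlog4 : Real.log (4 * L) ≤ 2 + u := by
    rw [Real.log_mul (by norm_num) hL0.ne', show (4 : ℝ) = 2 ^ 2 by norm_num, Real.log_pow]
    have := Real.log_two_lt_d9
    push_cast
    linarith
  have hlogL : 0 ≤ Real.log L := Real.log_nonneg hL3
  have e : k ^ 2 * L ^ a = Real.exp (2 * Real.log k + a * Real.log L) := by
    rw [Real.exp_add, mul_comm a, ← Real.rpow_def_of_pos hL0]
    congr 1
    rw [mul_comm, Real.exp_mul, Real.exp_log hk]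
    norm_cast
  rw [e, ← Real.exp_add, Real.exp_le_exp, hu2]
  have h5 : a * Real.log L ≤ |a| * u := by
    calc a * Real.log L ≤ |a| * Real.log L := by gcongr; exact le_abs_self a
      _ ≤ _ := by gcongr
  have h6 : 2 * (k * u ^ 2 * (16 * (1 + Real.log (4 * L)))) ≤ 64 * k * u ^ 3 := by
    calc 2 * (k * u ^ 2 * (16 * (1 + Real.log (4 * L))))
        ≤ 2 * (k * u ^ 2 * (16 * (2 * u))) := by gcongr; linarith
      _ = _ := by ring
  have h7 : |a| * u ≤ |a| * u ^ 3 := by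
    gcongr
    exact le_self_pow₀ (by linarith) (by norm_num)
  have h8 : 2 * Real.log k ≤ 2 * |Real.log k| * u ^ 3 := by
    calc 2 * Real.log k ≤ 2 * |Real.log k| * 1 := by linarith [le_abs_self (Real.log k)]
      _ ≤ _ := by
        gcongr
        exact one_le_pow₀ (by linarith)
  have h9 : (64 * k + |a| + 2 * |Real.log k|) * u ^ 3 ≤ u * u ^ 3 := by gcongr
  calc _ ≤ (64 * k + |a| + 2 * |Real.log k|) * u ^ 3 := by linarith
    _ ≤ u * u ^ 3 := h9
    _ = L := by rw [hu4]; ring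

lemma primesUpTo_eq_union {w t : ℝ} (hwt : w ≤ t) :
    primesUpTo t = primesUpTo w ∪ primesBetween w t := by
  ext p
  have hfloor : ∀ u : ℝ, (p : ℝ) ≤ u → p < ⌊u⌋₊ + 1 := fun u hu =>
    Nat.lt_succ_of_le (Nat.le_floor hu)
  simp only [primesUpTo, primesBetween, Finset.mem_union, Finset.mem_filter, Finset.mem_range]
  constructor
  · rintro ⟨_, hp, hpt⟩
    rcases le_or_gt (p : ℝ) w with h | h
    · exact Or.inl ⟨hfloor w h, hp, h⟩
    · exact Or.inr ⟨hfloor t hpt, hp, h, hpt⟩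
  · rintro (⟨_, hp, h⟩ | ⟨_, hp, _, h⟩)
    · exact ⟨hfloor t (h.trans hwt), hp, h.trans hwt⟩
    · exact ⟨hfloor t h, hp, h⟩

lemma prime_of_mem_primesBetween {w t : ℝ} {p : ℕ} (hp : p ∈ primesBetween w t) : p.Prime :=
  (Finset.mem_filter.1 hp).2.1

lemma disjoint_primesUpTo_primesBetween (w t : ℝ) :
    Disjoint (primesUpTo w) (primesBetween w t) := by
  rw [Finset.disjoint_left]
  intro p h1 h2
  exact absurd (Finset.mem_filter.1 h1).2.2 (not_le.2 (Finset.mem_filter.1 h2).2.2.1)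

lemma PP_eq_mul {w t : ℝ} (hwt : w ≤ t) : PP t = PP w * ∏ p ∈ primesBetween w t, p := by
  unfold PP
  rw [primesUpTo_eq_union hwt, Finset.prod_union (disjoint_primesUpTo_primesBetween w t)]

lemma PP_ne_zero (t : ℝ) : PP t ≠ 0 :=
  Finset.prod_ne_zero_iff.2 fun _ hp => (Finset.mem_filter.1 hp).2.1.ne_zero

lemma coprime_PP_prod_primesBetween (w t : ℝ) :
    (PP w).Coprime (∏ p ∈ primesBetween w t, p) := by
  refine Nat.Coprime.prod_left fun p hp => Nat.Coprime.prod_right fun r hr =>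
    (Nat.coprime_primes (Finset.mem_filter.1 hp).2.1 (prime_of_mem_primesBetween hr)).2 ?_
  rintro rfl
  exact Finset.disjoint_left.1 (disjoint_primesUpTo_primesBetween w t) hp hr

lemma inSBetween_iff {w t : ℝ} {b n : ℤ} :
    inSBetween w t b n ↔ ∀ p ∈ primesBetween w t, ¬ ((p : ℤ) ∣ n - b) := by
  constructor
  · intro h p hp
    have := (Finset.mem_filter.1 hp).2
    exact h p this.1 this.2.1 this.2.2
  · intro h p hp h1 h2
    exact h p (Finset.mem_filter.2
      ⟨Finset.mem_range.2 (Nat.lt_succ_of_le (Nat.le_floor h2)), hp, h1, h2⟩)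

lemma inS_mod_PP (t : ℝ) (b : ℕ) (n : ℤ) : inS t ((b % PP t : ℕ) : ℤ) n ↔ inS t (b : ℤ) n := by
  unfold inS
  refine forall_congr' fun p => forall₂_congr fun hp h => not_congr ?_
  refine dvd_sub_iff_of_mod_eq (Nat.mod_mod_of_dvd _ ?_) n
  exact Finset.dvd_prod_of_mem _ (Finset.mem_filter.2
    ⟨Finset.mem_range.2 (Nat.lt_succ_of_le (Nat.le_floor h)), hp, h⟩)

lemma lam_eq_sieveWeight (M t : ℝ) (K : ℕ) (b : ℕ) (H : ℝ) (q : ℕ) (n : ℤ) :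
    lam M t K (b : ℤ) H q n =
      sieveWeight (primesBetween (H ^ M) t) (APset M K ((b % PP (H ^ M) : ℕ) : ℤ) H q n)
        ((b % ∏ p ∈ primesBetween (H ^ M) t, p : ℕ) : ℤ) := by
  have hAP : APset M K ((b % PP (H ^ M) : ℕ) : ℤ) H q n = APset M K (b : ℤ) H q n := by
    unfold APset
    exact Finset.filter_congr fun m _ => inS_mod_PP _ b m
  have hav : Avoids (primesBetween (H ^ M) t) (APset M K (b : ℤ) H q n)
      ((b % ∏ p ∈ primesBetween (H ^ M) t, p : ℕ) : ℤ) ↔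
      ∀ m ∈ APset M K (b : ℤ) H q n, inSBetween (H ^ M) t b m := by
    rw [avoids_congr (fun p hp => Finset.dvd_prod_of_mem _ hp) (Nat.mod_mod _ _)]
    simp only [inSBetween_iff, Avoids]
    exact ⟨fun h m hm p hp => h p hp m hm, fun h p hp m hm => h m hm p hp⟩
  unfold lam sieveWeight
  rw [hAP]
  simp only [hav, sigBetween]

/-- Second moment bound, averaged over a full period of `b`. -/
lemma sum_lam_variance_le {M t H D : ℝ} {K q R : ℕ} (hH : 0 < H) (hTt : H ^ M ≤ t)
    (hq : q.Prime) (htq : t < q) (hJ0 : ⌊(K : ℝ) * H⌋₊ ≠ 0)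
    (hJT : (⌊(K : ℝ) * H⌋₊ : ℝ) ≤ H ^ M) (hJD : (⌊(K : ℝ) * H⌋₊ : ℝ) ^ 2 ≤ D * H ^ M)
    (I : Finset ℤ)
    (hR : ∀ n₁ ∈ I, ∀ n₂ ∈ I, ∀ h₁ ∈ Finset.Icc 1 ⌊(K : ℝ) * H⌋₊,
      ∀ h₂ ∈ Finset.Icc 1 ⌊(K : ℝ) * H⌋₊, |n₁ - n₂ + q * ((h₁ : ℤ) - h₂)| ≤ R) :
    ∑ b ∈ Finset.range (PP t), (∑ n ∈ I, lam M t K (b : ℤ) H q n - (I.card : ℝ)) ^ 2 ≤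
      (PP t : ℝ) * (I.card * (
        2 * R * (Real.exp (2 * (2 * (⌊(K : ℝ) * H⌋₊ : ℝ) ^ 2 * Real.exp (2 * D)) / H ^ M) - 1) +
        (⌊(K : ℝ) * H⌋₊ : ℝ) ^ 2 * Real.exp (⌊(K : ℝ) * H⌋₊ *
          ∑ p ∈ primesBetween (H ^ M) t, 2 / (p : ℝ)) ^ 2 +
        4 * I.card * (⌊(K : ℝ) * H⌋₊ : ℝ) ^ 2 / H ^ M)) := by
  have hs : ∀ p ∈ primesBetween (H ^ M) t, p.Prime := fun p hp => prime_of_mem_primesBetween hp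
  have hndvd : ∀ p ∈ primesBetween (H ^ M) t, ¬ p ∣ q := fun p hp hpq => by
    have h1 := (Nat.prime_dvd_prime_iff_eq (hs p hp) hq).1 hpq
    have h2 := (Finset.mem_filter.1 hp).2.2.2
    rw [h1] at h2
    linarith
  simp only [lam_eq_sieveWeight]
  rw [PP_eq_mul hTt, sum_range_mul_of_coprime (coprime_PP_prod_primesBetween _ _) (PP_ne_zero _)
    (Finset.prod_ne_zero_iff.2 fun p hp => (hs p hp).ne_zero)
    (fun a c => (∑ n ∈ I, sieveWeight (primesBetween (H ^ M) t) (APset M K (a : ℤ) H q n)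
      (c : ℤ) - (I.card : ℝ)) ^ 2)]
  refine (Finset.sum_le_card_nsmul _ _ _ fun (a : ℕ) _ =>
    sum_sieveWeight_variance_le hs (Real.rpow_pos_of_pos hH M)
      (fun p hp => (Finset.mem_filter.1 hp).2.2.1) hndvd hJ0 hJT hJD
      (A := fun n => APset M K (a : ℤ) H q n) (fun n => Finset.filter_subset _ _) I hR).trans_eq ?_
  rw [Finset.card_range, nsmul_eq_mul, ← mul_assoc, Nat.cast_mul]

lemma exists_forall_parameter_bounds (δ M : ℝ) (K : ℕ) (ξ : ℝ)
    (hδ0 : 0 < δ) (hδ1 : δ < 1 / 2) (hK : 2 ≤ K) (hξ : 1 < ξ) (hM : 2 ≤ M) :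
    ∃ x₀ : ℝ, ∀ x ≥ x₀, ∀ H ∈ frakH1 δ ξ x, 1 ≤ Real.log x ∧ 0 < (yy δ x : ℝ) ∧
      (K : ℝ) ≤ H ∧ H ≤ Real.log x ^ (1 / 2 : ℝ) ∧ H ^ M ≤ zz δ x ∧
      zz δ x ≤ Real.exp (2 * Real.log x) ∧ zz δ x ≤ (yy δ x : ℝ) / (ξ * H) ∧
      (K : ℝ) ^ 2 * H ^ M * Real.exp (2 * (K * H * (16 * (1 + Real.log (4 * Real.log x))))) ≤
        yy δ x := by
  have hK0 : (0 : ℝ) < K := by exact_mod_cast (by omega : 0 < K)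
  have hK1 : (1 : ℝ) ≤ K := by exact_mod_cast (by omega : 1 ≤ K)
  have hloglog : ∀ᶠ L : ℝ in Filter.atTop, Real.log L ≤ L ^ (1 / 4 : ℝ) := by
    have := (isLittleO_log_rpow_atTop (by norm_num : (0 : ℝ) < 1 / 4)).bound one_pos
    filter_upwards [this, Filter.eventually_ge_atTop 1] with L hL hL1
    rw [one_mul, Real.norm_of_nonneg (Real.log_nonneg hL1),
      Real.norm_of_nonneg (by positivity)] at hL
    exact hL
  have hev : ∀ᶠ x : ℝ in Filter.atTop, 1 ≤ x ∧ 1 ≤ Real.log x ∧ 1 ≤ Real.log (Real.log x) ∧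
      Real.log (Real.log x) ≤ Real.log x ^ (1 / 4 : ℝ) ∧ (K : ℝ) ≤ Real.log x ^ δ ∧
      (K : ℝ) ^ 2 * Real.log x ^ (M / 2 + 1 / 2) * Real.exp (2 * (K * Real.log x ^ (1 / 2 : ℝ) *
        (16 * (1 + Real.log (4 * Real.log x))))) ≤ Real.exp (Real.log x) := by
    filter_upwards [Filter.eventually_ge_atTop 1,
      Real.tendsto_log_atTop.eventually_ge_atTop 1,
      (Real.tendsto_log_atTop.comp Real.tendsto_log_atTop).eventually_ge_atTop 1,
      Real.tendsto_log_atTop.eventually hloglog,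
      ((tendsto_rpow_atTop hδ0).comp Real.tendsto_log_atTop).eventually_ge_atTop (K : ℝ),
      Real.tendsto_log_atTop.eventually (eventually_rpow_mul_exp_le (M / 2 + 1 / 2) K hK0)]
      with x h1 h2 h3 h4 h5 h6
    exact ⟨h1, h2, h3, h4, h5, h6⟩
  obtain ⟨x₀, hx₀⟩ := Filter.eventually_atTop.1 hev
  refine ⟨x₀, fun x hx H hH => ?_⟩
  obtain ⟨hx1, hL1, hll1, hll, hKL, hbig⟩ := hx₀ x hx
  obtain ⟨j, -, -, hH1, hH2⟩ := hH
  have hx0 : 0 < x := by linarith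
  set L := Real.log x with hL
  have hL0 : 0 < L := by linarith
  have hexp : Real.exp L = x := Real.exp_log hx0
  set r := L ^ (1 / 2 : ℝ) with hr
  have hr1 : 1 ≤ r := Real.one_le_rpow hL1 (by norm_num)
  have hy_ge : x * L ^ δ ≤ yy δ x := Nat.le_ceil _
  have hLδ1 : 1 ≤ L ^ δ := Real.one_le_rpow hL1 hδ0.le
  have hyx : x ≤ yy δ x := le_trans (by nlinarith) hy_ge
  have hy0 : (0 : ℝ) < yy δ x := by linarith
  have hy_le : (yy δ x : ℝ) ≤ Real.exp (2 * L) := by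
    have h1 : (yy δ x : ℝ) < x * L ^ δ + 1 := Nat.ceil_lt_add_one (by positivity)
    have h2 : L ^ δ ≤ L := by
      calc L ^ δ ≤ L ^ (1 : ℝ) := Real.rpow_le_rpow_of_exponent_le hL1 (by linarith)
        _ = L := Real.rpow_one L
    have h3 : L ≤ x - 1 := Real.log_le_sub_one_of_pos hx0
    have h4 : Real.exp (2 * L) = x * x := by rw [two_mul, Real.exp_add, hexp]
    rw [h4]
    nlinarith [mul_le_mul_of_nonneg_left (h2.trans h3) hx0.le]
  set ℓ := Real.log L with hℓ
  have hℓ2 : ℓ ^ 2 ≤ r := by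
    calc ℓ ^ 2 ≤ (L ^ (1 / 4 : ℝ)) ^ 2 := pow_le_pow_left₀ (by linarith) hll 2
      _ = r := by rw [hr, ← Real.rpow_natCast, ← Real.rpow_mul hL0.le]; norm_num
  have hℓ1 : 1 ≤ ℓ ^ 2 := one_le_pow₀ hll1
  have hz : zz δ x = yy δ x * ℓ ^ 2 / r := rfl
  have hz_ge : (yy δ x : ℝ) / r ≤ zz δ x := by
    rw [hz]
    gcongr
    nlinarith
  have hz0 : 0 < zz δ x := lt_of_lt_of_le (by positivity) hz_ge
  have hz_le : zz δ x ≤ yy δ x := by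
    rw [hz, div_le_iff₀ (by linarith)]
    gcongr
  have hKH : (K : ℝ) ≤ H := by
    refine le_trans ?_ hH1
    rw [le_div_iff₀ hx0]
    nlinarith
  have hH0 : 0 < H := by linarith
  have hHr : H ≤ r := by
    refine hH2.trans ?_
    rw [div_le_iff₀ (by positivity)]
    have : (yy δ x : ℝ) ≤ r * zz δ x := by rwa [div_le_iff₀' (by linarith)] at hz_ge
    nlinarith [mul_pos (lt_of_lt_of_le one_pos hr1) hz0]
  have hT : H ^ M ≤ L ^ (M / 2) := by
    calc H ^ M ≤ r ^ M := Real.rpow_le_rpow hH0.le hHr (by linarith)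
      _ = L ^ (M / 2) := by rw [hr, ← Real.rpow_mul hL0.le]; congr 1; ring
  have hLa : L ^ (M / 2) ≤ L ^ (M / 2 + 1 / 2) :=
    Real.rpow_le_rpow_of_exponent_le hL1 (by linarith)
  have hlog4 : 0 ≤ Real.log (4 * L) := Real.log_nonneg (by linarith)
  have hTz : H ^ M ≤ zz δ x := by
    refine le_trans ?_ hz_ge
    rw [le_div_iff₀ (by linarith)]
    calc H ^ M * r ≤ L ^ (M / 2) * r := by gcongr
      _ = 1 * L ^ (M / 2 + 1 / 2) * 1 := by rw [hr, ← Real.rpow_add hL0]; ring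
      _ ≤ (K : ℝ) ^ 2 * L ^ (M / 2 + 1 / 2) *
          Real.exp (2 * (K * r * (16 * (1 + Real.log (4 * L))))) := by
          gcongr
          · exact one_le_pow₀ hK1
          · exact Real.one_le_exp (by positivity)
      _ ≤ x := by rw [← hexp]; exact hbig
      _ ≤ yy δ x := hyx
  refine ⟨hL1, hy0, hKH, hHr, hTz, hz_le.trans hy_le, ?_, ?_⟩
  · rw [le_div_iff₀ (by positivity)] at hH2 ⊢
    linarith
  · calc _ ≤ (K : ℝ) ^ 2 * L ^ (M / 2 + 1 / 2) *
          Real.exp (2 * (K * r * (16 * (1 + Real.log (4 * L))))) := by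
          have : H ^ M ≤ L ^ (M / 2 + 1 / 2) := hT.trans hLa
          gcongr
      _ ≤ x := by rw [← hexp]; exact hbig
      _ ≤ yy δ x := hyx

lemma abs_sub_add_mul_le {y K q J : ℕ} (hqJ : q * J ≤ K * y) {n₁ n₂ : ℤ}
    (hn₁ : n₁ ∈ Finset.Ioc (-((K * y : ℕ) : ℤ)) (y : ℤ))
    (hn₂ : n₂ ∈ Finset.Ioc (-((K * y : ℕ) : ℤ)) (y : ℤ)) {h₁ h₂ : ℕ}
    (hh₁ : h₁ ∈ Finset.Icc 1 J) (hh₂ : h₂ ∈ Finset.Icc 1 J) :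
    |n₁ - n₂ + q * ((h₁ : ℤ) - h₂)| ≤ ((2 * K + 1) * y : ℕ) := by
  rw [Finset.mem_Ioc] at hn₁ hn₂
  rw [Finset.mem_Icc] at hh₁ hh₂
  have hq1 : q * h₁ ≤ K * y := (Nat.mul_le_mul_left q hh₁.2).trans hqJ
  have hq2 : q * h₂ ≤ K * y := (Nat.mul_le_mul_left q hh₂.2).trans hqJ
  zify at hq1 hq2
  have hp1 : (0 : ℤ) ≤ q * h₁ := by positivity
  have hp2 : (0 : ℤ) ≤ q * h₂ := by positivity
  push_cast at hn₁ hn₂ ⊢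
  rw [abs_le]
  constructor <;> nlinarith

/-- The implied constant in the second moment bound. -/
noncomputable def varianceConst (K : ℕ) : ℝ :=
  4 * (4 * (K : ℝ) ^ 2 * Real.exp (2 * (K : ℝ) ^ 2) *
    Real.exp (4 * (K : ℝ) ^ 2 * Real.exp (2 * (K : ℝ) ^ 2))) + 1 + 4 * (K : ℝ) ^ 2

lemma sum_lam_sub_sq_le {δ M ξ x H : ℝ} {K q : ℕ} (hK : 2 ≤ K) (hM : 2 ≤ M)
    (hL : 1 ≤ Real.log x) (hy : 0 < (yy δ x : ℝ)) (hKH : (K : ℝ) ≤ H) (hTz : H ^ M ≤ zz δ x)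
    (hz : zz δ x ≤ Real.exp (2 * Real.log x)) (hzy : zz δ x ≤ (yy δ x : ℝ) / (ξ * H))
    (hdiag : (K : ℝ) ^ 2 * H ^ M *
      Real.exp (2 * (K * H * (16 * (1 + Real.log (4 * Real.log x))))) ≤ yy δ x)
    (hq : q ∈ QH δ ξ x H) :
    ∑ b ∈ Finset.range (PP (zz δ x)),
        ((∑ n ∈ Finset.Ioc (-((K * yy δ x : ℕ) : ℤ)) ((yy δ x : ℤ)),
          lam M (zz δ x) K (b : ℤ) H q n) - ((K : ℝ) + 1) * (yy δ x : ℝ)) ^ 2 ≤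
      PP (zz δ x) * (varianceConst K * (((K : ℝ) + 1) * yy δ x) ^ 2 * H ^ (2 - M)) := by
  obtain ⟨hqp, hq1, hq2⟩ := (Finset.mem_filter.1 hq).2
  have hK2 : (2 : ℝ) ≤ K := by exact_mod_cast hK
  have hH1 : 1 ≤ H := by linarith
  have hH0 : 0 < H := by linarith
  set J := ⌊(K : ℝ) * H⌋₊ with hJ
  set y := yy δ x with hydef
  set T := H ^ M with hT
  set g := H ^ (2 - M) with hg
  have hT0 : 0 < T := Real.rpow_pos_of_pos hH0 M
  have hg0 : 0 < g := Real.rpow_pos_of_pos hH0 _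
  have hg1 : g ≤ 1 := Real.rpow_le_one_of_one_le_of_nonpos hH1 (by linarith)
  have hTg : T * g = H ^ 2 := by
    rw [hT, hg, ← Real.rpow_add hH0, ← Real.rpow_natCast]
    congr 1
    push_cast
    ring
  have hJle : (J : ℝ) ≤ K * H := Nat.floor_le (by positivity)
  have hJ0 : J ≠ 0 := by
    have : 1 ≤ J := Nat.le_floor (by push_cast; nlinarith)
    omega
  have hHT : H ^ 2 ≤ T := by nlinarith
  have hJT : (J : ℝ) ≤ T := by nlinarith
  have hJsq : (J : ℝ) ^ 2 ≤ (K : ℝ) ^ 2 * H ^ 2 := by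
    rw [← mul_pow]
    exact pow_le_pow_left₀ (Nat.cast_nonneg _) hJle 2
  have hJD : (J : ℝ) ^ 2 ≤ (K : ℝ) ^ 2 * T := hJsq.trans (by gcongr)
  have hJg : (J : ℝ) ^ 2 / T ≤ (K : ℝ) ^ 2 * g := by
    rw [div_le_iff₀ hT0]
    calc _ ≤ _ := hJsq
      _ = _ := by rw [← hTg]; ring
  have hqJ : q * J ≤ K * y := by
    have : (q : ℝ) * J ≤ K * y := by
      calc (q : ℝ) * J ≤ (y / H) * (K * H) := by gcongr
        _ = K * y := by field_simp
    exact_mod_cast this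
  set I := Finset.Ioc (-((K * y : ℕ) : ℤ)) (y : ℤ) with hI
  have hIcard : (I.card : ℝ) = ((K : ℝ) + 1) * y := by
    have : I.card = (K + 1) * y := by
      rw [hI, Int.card_Ioc]
      push_cast
      have : (y : ℤ) - -((K : ℤ) * y) = (((K + 1) * y : ℕ) : ℤ) := by push_cast; ring
      rw [this, Int.toNat_natCast]
    rw [this]
    push_cast
    ring
  have hmain := sum_lam_variance_le (M := M) (t := zz δ x) (K := K) (q := q)
    (R := (2 * K + 1) * y) hH0 hTz hqp (hzy.trans_lt hq1) hJ0 hJT hJD I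
    fun n₁ hn₁ n₂ hn₂ h₁ hh₁ h₂ hh₂ => abs_sub_add_mul_le hqJ hn₁ hn₂ hh₁ hh₂
  rw [hIcard] at hmain
  refine hmain.trans (mul_le_mul_of_nonneg_left ?_ (Nat.cast_nonneg _))
  rw [← hJ, ← hT]
  set N := ((K : ℝ) + 1) * y with hN
  have hN0 : 0 < N := by positivity
  have hyN : (y : ℝ) ≤ N := by nlinarith
  have hRN : (((2 * K + 1) * y : ℕ) : ℝ) ≤ 2 * N := by
    push_cast
    nlinarith
  set c := 4 * (K : ℝ) ^ 2 * Real.exp (2 * (K : ℝ) ^ 2) with hc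
  have hc0 : 0 ≤ c := by positivity
  have hu : 2 * (2 * (J : ℝ) ^ 2 * Real.exp (2 * (K : ℝ) ^ 2)) / T ≤ c * g := by
    calc _ = 4 * Real.exp (2 * (K : ℝ) ^ 2) * ((J : ℝ) ^ 2 / T) := by ring
      _ ≤ 4 * Real.exp (2 * (K : ℝ) ^ 2) * ((K : ℝ) ^ 2 * g) := by gcongr
      _ = _ := by rw [hc]; ring
  have hexp : Real.exp (2 * (2 * (J : ℝ) ^ 2 * Real.exp (2 * (K : ℝ) ^ 2)) / T) - 1 ≤
      c * Real.exp c * g := by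
    calc _ ≤ Real.exp (c * g) - 1 := sub_le_sub_right (Real.exp_le_exp.2 hu) 1
      _ ≤ c * g * Real.exp c :=
          exp_sub_one_le_mul (by positivity) (mul_le_of_le_one_right hc0 hg1)
      _ = _ := by ring
  have hprimes : ∑ p ∈ primesBetween T (zz δ x), 2 / (p : ℝ) ≤
      16 * (1 + Real.log (4 * Real.log x)) :=
    sum_inv_primes_le (fun p hp => prime_of_mem_primesBetween hp) hL
      fun p hp => (Finset.mem_filter.1 hp).2.2.2.trans hz
  have hdiag' : (J : ℝ) ^ 2 *
      Real.exp (J * ∑ p ∈ primesBetween T (zz δ x), 2 / (p : ℝ)) ^ 2 ≤ N * g := by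
    have hsum0 : 0 ≤ ∑ p ∈ primesBetween T (zz δ x), 2 / (p : ℝ) :=
      Finset.sum_nonneg fun _ _ => by positivity
    calc _ ≤ ((K : ℝ) ^ 2 * H ^ 2) *
          Real.exp (K * H * (16 * (1 + Real.log (4 * Real.log x)))) ^ 2 := by
          gcongr
      _ = (K : ℝ) ^ 2 * T * Real.exp (2 * (K * H * (16 * (1 + Real.log (4 * Real.log x))))) * g := by
          rw [← hTg, ← Real.exp_nat_mul]
          push_cast
          ring
      _ ≤ y * g := by gcongr
      _ ≤ N * g := by gcongr
  have hlast : 4 * N * (J : ℝ) ^ 2 / T ≤ 4 * N * ((K : ℝ) ^ 2 * g) := by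
    rw [mul_div_assoc]
    gcongr
  have hfirst : 2 * (((2 * K + 1) * y : ℕ) : ℝ) *
      (Real.exp (2 * (2 * (J : ℝ) ^ 2 * Real.exp (2 * (K : ℝ) ^ 2)) / T) - 1) ≤
      2 * (2 * N) * (c * Real.exp c * g) := by
    have : 0 ≤ c * Real.exp c * g := by positivity
    calc _ ≤ 2 * (((2 * K + 1) * y : ℕ) : ℝ) * (c * Real.exp c * g) := by gcongr
      _ ≤ _ := by gcongr
  calc _ ≤ N * (2 * (2 * N) * (c * Real.exp c * g) + N * g + 4 * N * ((K : ℝ) ^ 2 * g)) := by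
        refine mul_le_mul_of_nonneg_left ?_ hN0.le
        exact add_le_add (add_le_add hfirst hdiag') hlast
    _ = _ := by rw [varianceConst, ← hc]; ring

theorem stmt14 (δ M : ℝ) (K : ℕ) (ξ ε : ℝ)
    (hδ0 : 0 < δ) (hδ1 : δ < 1/2) (hK : 2 ≤ K) (hξ : 1 < ξ) (hM : 2 ≤ M) (hε : 0 < ε) :
    ∃ C : ℝ, 0 < C ∧ ∃ x₀ : ℝ, ∀ x ≥ x₀, ∀ H ∈ frakH1 δ ξ x,
      EE δ x (fun b => (((QH δ ξ x H).filter (fun q =>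
          (yy δ x : ℝ) / H ^ (1 + ε) <
            |(∑ n ∈ Finset.Ioc (-((K * yy δ x : ℕ) : ℤ)) ((yy δ x : ℤ)),
                lam M (zz δ x) K b H q n) - ((K : ℝ) + 1) * (yy δ x : ℝ)|)).card : ℝ)) ≤
        C * ((QH δ ξ x H).card : ℝ) / H ^ (M - 4 - 2 * ε) := by
  have hK0 : (0 : ℝ) < K := by exact_mod_cast (by omega : 0 < K)
  have hV : 0 < varianceConst K := by unfold varianceConst; positivity
  obtain ⟨x₀, hx₀⟩ := exists_forall_parameter_bounds δ M K ξ hδ0 hδ1 hK hξ hM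
  refine ⟨varianceConst K * ((K : ℝ) + 1) ^ 2, by positivity, x₀, fun x hx H hH => ?_⟩
  obtain ⟨hL, hy, hKH, -, hTz, hz, hzy, hdiag⟩ := hx₀ x hx H hH
  have hH0 : 0 < H := hK0.trans_le hKH
  have hP : (0 : ℝ) < PP (zz δ x) := by exact_mod_cast Nat.pos_of_ne_zero (PP_ne_zero _)
  set τ := (yy δ x : ℝ) / H ^ (1 + ε) with hτ
  have hτ0 : 0 < τ := div_pos hy (Real.rpow_pos_of_pos hH0 _)
  let dev : ℤ → ℕ → ℝ := fun b q =>
    (∑ n ∈ Finset.Ioc (-((K * yy δ x : ℕ) : ℤ)) ((yy δ x : ℤ)),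
      lam M (zz δ x) K b H q n) - ((K : ℝ) + 1) * (yy δ x : ℝ)
  have hmarkov : ∀ b : ℤ, (((QH δ ξ x H).filter fun q => τ < |dev b q|).card : ℝ) ≤
      ∑ q ∈ QH δ ξ x H, (τ ^ 2)⁻¹ * dev b q ^ 2 := fun b => by
    rw [Finset.card_filter]
    push_cast
    refine Finset.sum_le_sum fun q _ => ?_
    split_ifs with h
    · rw [le_inv_mul_iff₀ (by positivity), mul_one, ← sq_abs (dev b q)]
      exact pow_le_pow_left₀ hτ0.le h.le 2
    · positivity
  have hτsq : (τ ^ 2)⁻¹ * (((K : ℝ) + 1) * yy δ x) ^ 2 * H ^ (2 - M) =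
      ((K : ℝ) + 1) ^ 2 / H ^ (M - 4 - 2 * ε) := by
    have e : H ^ (M - 4 - 2 * ε) * ((H ^ (1 + ε)) ^ 2 * H ^ (2 - M)) = 1 := by
      rw [← Real.rpow_natCast, ← Real.rpow_mul hH0.le, ← Real.rpow_add hH0, ← Real.rpow_add hH0]
      have h0 : M - 4 - 2 * ε + ((1 + ε) * ((2 : ℕ) : ℝ) + (2 - M)) = 0 := by
        push_cast
        ring
      rw [h0, Real.rpow_zero]
    rw [eq_div_iff (Real.rpow_pos_of_pos hH0 _).ne', hτ, div_pow, inv_div]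
    calc _ = ((K : ℝ) + 1) ^ 2 * ((yy δ x : ℝ) ^ 2 / (yy δ x : ℝ) ^ 2) *
          (H ^ (M - 4 - 2 * ε) * ((H ^ (1 + ε)) ^ 2 * H ^ (2 - M))) := by ring
      _ = _ := by rw [e, div_self (by positivity)]; ring
  calc EE δ x (fun b => (((QH δ ξ x H).filter fun q => τ < |dev b q|).card : ℝ))
      ≤ (1 / (PP (zz δ x) : ℝ)) * ∑ b ∈ Finset.range (PP (zz δ x)),
          ∑ q ∈ QH δ ξ x H, (τ ^ 2)⁻¹ * dev (b : ℤ) q ^ 2 := by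
        unfold EE
        exact mul_le_mul_of_nonneg_left (Finset.sum_le_sum fun b _ => hmarkov b) (by positivity)
    _ = (1 / (PP (zz δ x) : ℝ)) * ∑ q ∈ QH δ ξ x H, (τ ^ 2)⁻¹ *
          ∑ b ∈ Finset.range (PP (zz δ x)), dev (b : ℤ) q ^ 2 := by
        rw [Finset.sum_comm]
        simp only [Finset.mul_sum]
    _ ≤ (1 / (PP (zz δ x) : ℝ)) * ∑ q ∈ QH δ ξ x H, (τ ^ 2)⁻¹ *
          (PP (zz δ x) * (varianceConst K * (((K : ℝ) + 1) * yy δ x) ^ 2 * H ^ (2 - M))) := by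
        gcongr with q hq
        exact sum_lam_sub_sq_le hK hM hL hy hKH hTz hz hzy hdiag hq
    _ = varianceConst K * (QH δ ξ x H).card *
          ((τ ^ 2)⁻¹ * (((K : ℝ) + 1) * yy δ x) ^ 2 * H ^ (2 - M)) := by
        rw [Finset.sum_const, nsmul_eq_mul]
        field_simp
    _ = _ := by rw [hτsq]; ring
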